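/- arXiv:2212.01934 — 2 statements merged into one kernel-verified Lean document; each statement's English description precedes it below -/
import Mathlib

section
/- Let G be a group acting by isometries on a metric space X, let x ∈ X, and let D_x be the Dirichlet domain of x. Assume the G-translates of D_x cover X, i.e. ⋃ (γ : G), γ • D_x = X. Then for all y, z ∈ X, the quotient extended distance satisfies ⨅ (γ : G), edist y (γ • z) ≤ EMetric.diam D_x. (This is the inequality dia(S) ≤ dia(D_x) for the quotient surface S = X/G.) -/
open Pointwise

/-!
The quotient distance depends only on the orbits of its two arguments. Since the translates of
`D_x` cover `X`, both points may therefore be moved into `D_x`, where their distance is at most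
its diameter.
-/

section QuotientDistance

variable {G X : Type*} [Group G] [MulAction G X]

theorem iInf_edist_smul_smul_right [EDist X] (a : G) (y z : X) :
    ⨅ γ : G, edist y (γ • a • z) = ⨅ γ : G, edist y (γ • z) :=
  (Equiv.mulRight a).iInf_congr fun γ ↦ by rw [Equiv.coe_mulRight, mul_smul]

variable [PseudoEMetricSpace X] [IsIsometricSMul G X]

theorem iInf_edist_smul_smul_left (a : G) (y z : X) :
    ⨅ γ : G, edist (a • y) (γ • z) = ⨅ γ : G, edist y (γ • z) :=
  Eq.symm <| (Equiv.mulLeft a).iInf_congr fun γ ↦ by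
    rw [Equiv.coe_mulLeft, mul_smul, edist_smul_left]

theorem quotient_diam_le_dirichlet_diam_general {s : Set X} (hs : ⋃ γ : G, γ • s = Set.univ)
    (y z : X) : ⨅ γ : G, edist y (γ • z) ≤ Metric.ediam s := by
  obtain ⟨a, p, hp, rfl⟩ := Set.mem_iUnion.1 (Set.eq_univ_iff_forall.1 hs y)
  obtain ⟨b, q, hq, rfl⟩ := Set.mem_iUnion.1 (Set.eq_univ_iff_forall.1 hs z)
  calc ⨅ γ : G, edist (a • p) (γ • b • q)
    _ = ⨅ γ : G, edist p (γ • q) := by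
      rw [iInf_edist_smul_smul_left, iInf_edist_smul_smul_right]
    _ ≤ edist p q := iInf_le_of_le 1 (by rw [one_smul])
    _ ≤ Metric.ediam s := Metric.edist_le_ediam_of_mem hp hq

end QuotientDistance

/-- If the `G`-translates of the Dirichlet domain of `x` cover `X`, then the
quotient extended distance between any two orbits is at most the diameter of the
Dirichlet domain: `dia(S) ≤ dia(D_x)`. -/
theorem quotient_diam_le_dirichlet_diam {G X : Type*} [Group G] [MetricSpace X]
    [MulAction G X] (hiso : ∀ (γ : G) (y z : X), dist (γ • y) (γ • z) = dist y z)
    (x : X)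
    (hcover : ⋃ γ : G, γ • {y : X | ∀ γ' : G, dist x y ≤ dist (γ' • x) y} = Set.univ) :
    ∀ y z : X,
      (⨅ γ : G, edist y (γ • z)) ≤
        EMetric.diam {y : X | ∀ γ' : G, dist x y ≤ dist (γ' • x) y} := by
  have : IsIsometricSMul G X := ⟨fun γ ↦ Isometry.of_dist_eq (hiso γ)⟩
  exact quotient_diam_le_dirichlet_diam_general hcover
end

section
/- Let ℍ be the hyperbolic plane (the upper half-plane with its hyperbolic metric). For p, q ∈ ℍ write [p,q] := {z ∈ ℍ | dist p z + dist z q = dist p q} for the geodesic segment between p and q. Let C ⊆ ℍ be a closed set that is geodesically convex (for all p, q ∈ C, [p,q] ⊆ C). Let p₀, q₀, p₁, q₁ ∈ frontier C, and let α₀ be an injective path from p₀ to q₀ and α₁ an injective path from p₁ to q₁, both with image contained in C, such that every point of (range α₀) ∩ (range α₁) lies in {p₀, q₀} ∩ {p₁, q₁} (the paths are disjoint except possibly at common endpoints). Assume furthermore that the four points p₀, q₀, p₁, q₁ are not collinear, i.e. there do not exist u, v among these four points such that all four points lie on the segment [u,v]. Then the open segments are disjoint: ([p₀,q₀] \ {p₀,q₀})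 ∩ ([p₁,q₁] \ {p₁,q₁}) = ∅. -/
open UpperHalfPlane

/-- The geodesic segment between `p` and `q` in the hyperbolic plane. -/
def hypSeg (p q : UpperHalfPlane) : Set UpperHalfPlane :=
  {z | dist p z + dist z q = dist p q}

/-!
In the Klein model, realised in the affine chart where the absolute is a parabola, hyperbolic
segments are Euclidean segments, so `C` becomes a planar convex set `D`.

Suppose that the chords `PQ` and `P'Q'` cross while the paths `α` and `β` in `D` do not meet. Then
`α s - β t` never vanishes and has a continuous logarithm on the square. On each edge of the square
one of the two points is a fixed endpoint outside the interior of `D`, so a support line keeps the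
difference in a half-plane there. As the chords cross, this forces the argument to increase strictly
along each of the four edges, which is impossible around a closed loop. If the chords are parallel,
their crossing makes the four endpoints collinear.
-/

open scoped RealInnerProductSpace

section Collinearity

variable {R V P : Type*} [Field R] [LinearOrder R] [IsStrictOrderedRing R] [AddCommGroup V]
  [Module R V] [AddTorsor V P]

theorem exists_forall_wbtw_of_collinear {S : Set P} (hfin : S.Finite) (hne : S.Nonempty)
    (hS : Collinear R S) :
    ∃ a ∈ S, ∃ b ∈ S, ∀ x ∈ S, Wbtw R a x b := by
  obtain ⟨p, v, hv⟩ := (collinear_iff_exists_forall_eq_smul_vadd S).1 hS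
  choose! c hc using hv
  obtain ⟨a, ha, hmin⟩ := Set.exists_min_image S c hfin hne
  obtain ⟨b, hb, hmax⟩ := Set.exists_max_image S c hfin hne
  refine ⟨a, ha, b, hb, fun x hx => ?_⟩
  have hwbtw := (Wbtw.of_le_of_le (hmin x hx) (hmax x hx)).map (AffineMap.lineMap p (v +ᵥ p))
  simpa only [AffineMap.lineMap_apply, vadd_vsub, ← hc a ha, ← hc x hx, ← hc b hb] using hwbtw

variable {p q p' q' x : P}

theorem left_notMem_pair_of_not_collinear (h : Sbtw R p x q) (h' : Wbtw R p' x q')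
    (hcol : ¬ Collinear R {p, q, p', q'}) : p ∉ ({p', q'} : Set P) := by
  intro hp
  have hx : x ∈ line[R, p', q'] := h'.mem_affineSpan
  have hq : q ∈ line[R, p', q'] :=
    affineSpan_pair_le_of_mem_of_mem (subset_affineSpan R _ hp) hx
      (h.wbtw.right_mem_affineSpan_of_left_ne h.left_ne)
  exact hcol (collinear_insert_insert_of_mem_affineSpan_pair (subset_affineSpan R _ hp) hq)

theorem disjoint_pair_pair_of_not_collinear (h : Sbtw R p x q) (h' : Wbtw R p' x q')
    (hcol : ¬ Collinear R {p, q, p', q'}) : Disjoint ({p, q} : Set P) {p', q'} := by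
  rw [Set.disjoint_insert_left, Set.disjoint_singleton_left]
  exact ⟨left_notMem_pair_of_not_collinear h h' hcol,
    left_notMem_pair_of_not_collinear h.symm h' (by rwa [Set.insert_comm])⟩

end Collinearity

section Plane

variable {E : Type*} [NormedAddCommGroup E]

theorem interior_nonempty_of_not_collinear [NormedSpace ℝ E] [Fact (Module.finrank ℝ E = 2)]
    {D : Set E} (hD : Convex ℝ D) (hcol : ¬ Collinear ℝ D) : (interior D).Nonempty := by
  have : FiniteDimensional ℝ E := .of_fact_finrank_eq_two
  have hne : D.Nonempty := Set.nonempty_iff_ne_empty.2 fun h => hcol (h ▸ collinear_empty ℝ E)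
  rw [hD.interior_nonempty_iff_affineSpan_eq_top,
    AffineSubspace.affineSpan_eq_top_iff_vectorSpan_eq_top_of_nonempty _ _ _ hne]
  apply Submodule.eq_top_of_finrank_eq
  have hle := Submodule.finrank_le (vectorSpan ℝ D)
  rw [collinear_iff_finrank_le_one] at hcol
  rw [Fact.out (p := Module.finrank ℝ E = 2)] at hle ⊢
  omega

theorem exists_ne_zero_forall_inner_sub_nonneg [InnerProductSpace ℝ E] [CompleteSpace E]
    {D : Set E} (hD : Convex ℝ D) (hint : (interior D).Nonempty) {p : E} (hp : p ∉ interior D) :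
    ∃ n : E, n ≠ 0 ∧ ∀ w ∈ D, 0 ≤ ⟪n, w - p⟫ := by
  obtain ⟨f, hf⟩ := geometric_hahn_banach_point_open hD.interior isOpen_interior hp
  have hsub : D ⊆ {w | f p ≤ f w} :=
    calc D ⊆ closure (interior D) :=
          (hD.closure_interior_eq_closure_of_nonempty_interior hint).symm ▸ subset_closure
      _ ⊆ {w | f p ≤ f w} :=
          closure_minimal (fun w hw => (hf w hw).le) (isClosed_le continuous_const f.continuous)
  refine ⟨(InnerProductSpace.toDual ℝ E).symm f, ?_, fun w hw => ?_⟩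
  · rw [ne_eq, LinearIsometryEquiv.map_eq_zero_iff]
    rintro rfl
    obtain ⟨w, hw⟩ := hint
    exact (hf w hw).false
  · rw [InnerProductSpace.toDual_symm_apply, map_sub, sub_nonneg]
    exact hsub hw

variable [InnerProductSpace ℝ E] [Fact (Module.finrank ℝ E = 2)] (o : Orientation ℝ E (Fin 2))

theorem exists_eq_smul_of_areaForm_eq_zero {u v : E} (h : o.areaForm u v = 0) :
    ∃ (e : E) (a b : ℝ), u = a • e ∧ v = b • e := by
  have hray : SameRay ℝ u v ∨ SameRay ℝ u (-v) := by
    simp only [← o.nonneg_inner_and_areaForm_eq_zero_iff_sameRay, inner_neg_right, map_neg, h,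
      neg_zero, and_true, neg_nonneg]
    exact le_total 0 ⟪u, v⟫
  rcases hray with hray | hray
  · obtain ⟨e, a, b, -, -, -, hu, hv⟩ := hray.exists_eq_smul
    exact ⟨e, a, b, hu, hv⟩
  · obtain ⟨e, a, b, -, -, -, hu, hv⟩ := hray.exists_eq_smul
    exact ⟨e, a, -b, hu, by rw [← neg_neg v, hv]; module⟩

variable {p q p' q' x : E}

theorem collinear_of_areaForm_eq_zero (h : Wbtw ℝ p x q) (h' : Wbtw ℝ p' x q')
    (hω : o.areaForm (q - p) (q' - p') = 0) : Collinear ℝ {p, q, p', q'} := by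
  obtain ⟨s, -, hs⟩ := h
  obtain ⟨t, -, ht⟩ := h'
  obtain ⟨e, a, b, ha, hb⟩ := exists_eq_smul_of_areaForm_eq_zero o hω
  rw [AffineMap.lineMap_apply_module', ha] at hs
  rw [AffineMap.lineMap_apply_module', hb] at ht
  rw [collinear_iff_exists_forall_eq_smul_vadd]
  refine ⟨x, e, ?_⟩
  simp only [Set.mem_insert_iff, Set.mem_singleton_iff, forall_eq_or_imp, forall_eq, vadd_eq_add]
  refine ⟨⟨-(s * a), ?_⟩, ⟨a - s * a, ?_⟩, ⟨-(t * b), ?_⟩, ⟨b - t * b, ?_⟩⟩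
  · rw [← hs]; module
  · rw [eq_add_of_sub_eq ha, ← hs]; module
  · rw [← ht]; module
  · rw [eq_add_of_sub_eq hb, ← ht]; module

theorem exists_pos_areaForm_sub_sub_eq_mul (h : Sbtw ℝ p x q) (h' : Wbtw ℝ p' x q') :
    ∃ s > 0, o.areaForm (p' - p) (q' - p) = s * o.areaForm (q - p) (q' - p') := by
  obtain ⟨s, ⟨hs, -⟩, hx⟩ := h.mem_image_Ioo
  obtain ⟨t, -, hx'⟩ := h'
  rw [AffineMap.lineMap_apply_module'] at hx hx'
  refine ⟨s, hs, ?_⟩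
  have hp : p' - p = s • (q - p) - t • (q' - p') := by
    rw [sub_eq_sub_iff_add_eq_add, hx, add_comm, hx']
  calc o.areaForm (p' - p) (q' - p)
    _ = o.areaForm (p' - p) ((q' - p') + (p' - p)) := by rw [sub_add_sub_cancel]
    _ = o.areaForm (p' - p) (q' - p') := by rw [map_add, o.areaForm_apply_self, add_zero]
    _ = s * o.areaForm (q - p) (q' - p') := by
      rw [hp, LinearMap.map_sub₂, LinearMap.map_smul₂, LinearMap.map_smul₂,
        o.areaForm_apply_self, smul_zero, sub_zero, smul_eq_mul]

end Plane

section Complex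

open Complex

theorem exists_continuous_exp_eq {X : Type*} [TopologicalSpace X] [SimplyConnectedSpace X]
    [LocallyPathConnectedSpace X] {f : X → ℂ} (hf : Continuous f) (hf₀ : ∀ x, f x ≠ 0) :
    ∃ l : X → ℂ, Continuous l ∧ ∀ x, exp (l x) = f x := by
  have huniv : IsSimplyConnected (Set.univ : Set X) :=
    (Homeomorph.Set.univ X).toHomotopyEquiv.simplyConnectedSpace_iff.2 ‹_›
  obtain ⟨l, hl, hexp⟩ := exists_continuousOn_eqOn_exp_comp huniv isOpen_univ hf.continuousOn
    (fun ⟨x, _, hx⟩ => hf₀ x hx)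
  exact ⟨l, continuousOn_univ.1 hl, fun x => hexp (Set.mem_univ x)⟩

attribute [local instance] finrank_real_complex_fact

local notation "ω" => Orientation.areaForm Complex.orientation

theorem inner_exp_exp (z w : ℂ) :
    ⟪exp z, exp w⟫ = Real.exp (z.re + w.re) * Real.cos (w.im - z.im) := by
  rw [Complex.inner, ← exp_conj, ← exp_add, exp_re, add_comm z.re]
  simp only [add_re, add_im, conj_re, conj_im, ← sub_eq_add_neg]

theorem areaForm_exp_exp (z w : ℂ) :
    ω (exp z) (exp w) = Real.exp (z.re + w.re) * Real.sin (w.im - z.im) := by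
  rw [Complex.areaForm, ← exp_conj, ← exp_add, exp_im]
  simp only [add_re, add_im, conj_re, conj_im, ← sub_eq_neg_add]

theorem lt_of_sin_sub_pos_of_cos_nonneg {X : Type*} [TopologicalSpace X] [PreconnectedSpace X]
    {g : X → ℝ} (hg : Continuous g) (hcos : ∀ x, 0 ≤ Real.cos (g x)) {a b : X}
    (hsin : 0 < Real.sin (g b - g a)) : g a < g b := by
  by_contra! hle
  have hgap : g b + Real.pi < g a := by
    by_contra! hgap
    exact hsin.not_ge (Real.sin_nonpos_of_nonpos_of_neg_pi_le (by linarith) (by linarith))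
  have hcos_mid {y : ℝ} (hy : g b ≤ y) (hy' : y ≤ g a) : 0 ≤ Real.cos y := by
    obtain ⟨x, rfl⟩ := mem_range_of_exists_le_of_exists_ge hg ⟨b, hy⟩ ⟨a, hy'⟩
    exact hcos x
  have hπ := Real.pi_pos
  have hcos_a := hcos_mid (y := g a - Real.pi) (by linarith) (by linarith)
  have hcos_b := hcos_mid (y := g b + Real.pi) (by linarith) hgap.le
  rw [Real.cos_sub_pi, neg_nonneg] at hcos_a
  rw [Real.cos_add_pi, neg_nonneg] at hcos_b
  rw [Real.sin_sub, hcos_a.antisymm (hcos a), hcos_b.antisymm (hcos b), mul_zero, zero_mul,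
    sub_zero] at hsin
  exact hsin.false

variable {X : Type*} [TopologicalSpace X] [PreconnectedSpace X]

theorem im_lt_im_of_inner_exp_nonneg {l : X → ℂ} (hl : Continuous l) {n : ℂ} (hn : n ≠ 0)
    (hinner : ∀ x, 0 ≤ ⟪n, exp (l x)⟫) {a b : X} (hω : 0 < ω (exp (l a)) (exp (l b))) :
    (l a).im < (l b).im := by
  rw [areaForm_exp_exp, mul_pos_iff_of_pos_left (Real.exp_pos _)] at hω
  have hlt : (l a).im - (log n).im < (l b).im - (log n).im := by
    refine lt_of_sin_sub_pos_of_cos_nonneg (g := fun x => (l x).im - (log n).im) (by fun_prop)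
      (fun x => ?_) (by rwa [sub_sub_sub_cancel_right])
    have hx := hinner x
    rwa [← exp_log hn, inner_exp_exp, mul_nonneg_iff_of_pos_left (Real.exp_pos _)] at hx
  exact sub_lt_sub_iff_right _ |>.1 hlt

variable {D : Set ℂ}

theorem im_lt_im_of_exp_eq_smul_sub (hD : Convex ℝ D) (hint : (interior D).Nonempty)
    {P Q P' Q' x : ℂ} (hP : P ∉ interior D) (hx : Sbtw ℝ P x Q) (hx' : Wbtw ℝ P' x Q')
    (hω : 0 < ω (Q - P) (Q' - P')) {c : ℝ} (hc : c ≠ 0) {l γ : X → ℂ} (hl : Continuous l)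
    (hγ : ∀ t, γ t ∈ D) (hexp : ∀ t, exp (l t) = c • (γ t - P)) {a b : X} (ha : γ a = P')
    (hb : γ b = Q') : (l a).im < (l b).im := by
  obtain ⟨n, hn, hsupport⟩ := exists_ne_zero_forall_inner_sub_nonneg hD hint hP
  obtain ⟨s, hs, hs_eq⟩ := exists_pos_areaForm_sub_sub_eq_mul Complex.orientation hx hx'
  refine im_lt_im_of_inner_exp_nonneg hl (smul_ne_zero hc hn) (fun t => ?_) ?_
  · rw [hexp, real_inner_smul_left, real_inner_smul_right, ← mul_assoc]
    exact mul_nonneg (mul_self_nonneg c) (hsupport _ (hγ t))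
  · rw [hexp, hexp, ha, hb, map_smul, LinearMap.map_smul₂, hs_eq, smul_eq_mul, smul_eq_mul,
      ← mul_assoc]
    exact mul_pos (mul_self_pos.2 hc) (mul_pos hs hω)

theorem inter_range_nonempty_of_areaForm_pos (hD : Convex ℝ D) (hint : (interior D).Nonempty)
    {P Q P' Q' x : ℂ} (hP : P ∉ interior D) (hQ : Q ∉ interior D) (hP' : P' ∉ interior D)
    (hQ' : Q' ∉ interior D) (α : Path P Q) (β : Path P' Q') (hα : Set.range α ⊆ D)
    (hβ : Set.range β ⊆ D) (hx : Sbtw ℝ P x Q) (hx' : Sbtw ℝ P' x Q')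
    (hω : 0 < ω (Q - P) (Q' - P')) : (Set.range α ∩ Set.range β).Nonempty := by
  by_contra hdisj
  rw [← α.extend_range, ← β.extend_range] at hdisj
  have hα s : α.extend s ∈ D := hα (α.extend_range ▸ Set.mem_range_self s)
  have hβ t : β.extend t ∈ D := hβ (β.extend_range ▸ Set.mem_range_self t)
  have : SimplyConnectedSpace (ℝ × ℝ) := .ofContractible _
  obtain ⟨l, hl, hexp⟩ := exists_continuous_exp_eq
    (f := fun x : ℝ × ℝ => α.extend x.1 - β.extend x.2) (by fun_prop)
    (fun x h => hdisj ⟨_, ⟨x.1, rfl⟩, ⟨x.2, (sub_eq_zero.1 h).symm⟩⟩)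
  have hrot {u v : ℂ} (h : 0 < ω u v) : 0 < ω (-v) u := by
    rwa [LinearMap.map_neg₂, ← Orientation.areaForm_swap]
  have hω₂ : 0 < ω (P' - Q') (Q - P) := neg_sub Q' P' ▸ hrot hω
  have hω₃ : 0 < ω (P - Q) (P' - Q') := neg_sub Q P ▸ hrot hω₂
  have hω₄ : 0 < ω (Q' - P') (P - Q) := neg_sub P' Q' ▸ hrot hω₃
  have hleft : (l (0, 0)).im < (l (0, 1)).im :=
    im_lt_im_of_exp_eq_smul_sub hD hint hP hx hx'.wbtw hω (neg_ne_zero.2 one_ne_zero)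
      (l := fun t => l (0, t)) (by fun_prop) hβ (fun t => by simp [hexp]) β.extend_zero
      β.extend_one
  have htop : (l (0, 1)).im < (l (1, 1)).im :=
    im_lt_im_of_exp_eq_smul_sub hD hint hQ' hx'.symm hx.wbtw hω₂ one_ne_zero
      (l := fun s => l (s, 1)) (by fun_prop) hα (fun s => by simp [hexp]) α.extend_zero
      α.extend_one
  have hright : (l (1, 1)).im < (l (1, 0)).im :=
    im_lt_im_of_exp_eq_smul_sub hD hint hQ hx.symm hx'.wbtw.symm hω₃ (neg_ne_zero.2 one_ne_zero)
      (l := fun t => l (1, t)) (by fun_prop) hβ (fun t => by simp [hexp]) β.extend_one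
      β.extend_zero
  have hbottom : (l (1, 0)).im < (l (0, 0)).im :=
    im_lt_im_of_exp_eq_smul_sub hD hint hP' hx' hx.wbtw.symm hω₄ one_ne_zero
      (l := fun s => l (s, 0)) (by fun_prop) hα (fun s => by simp [hexp]) α.extend_one
      α.extend_zero
  exact ((hleft.trans htop).trans (hright.trans hbottom)).false

theorem inter_range_nonempty_of_not_collinear (hD : Convex ℝ D) {P Q P' Q' x : ℂ}
    (hP : P ∉ interior D) (hQ : Q ∉ interior D) (hP' : P' ∉ interior D) (hQ' : Q' ∉ interior D)
    (α : Path P Q) (β : Path P' Q') (hα : Set.range α ⊆ D)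
    (hβ : Set.range β ⊆ D) (hx : Sbtw ℝ P x Q) (hx' : Sbtw ℝ P' x Q')
    (hcol : ¬ Collinear ℝ {P, Q, P', Q'}) : (Set.range α ∩ Set.range β).Nonempty := by
  have hsub : ({P, Q, P', Q'} : Set ℂ) ⊆ D := by
    simp only [Set.insert_subset_iff, Set.singleton_subset_iff]
    exact ⟨hα ⟨0, α.source⟩, hα ⟨1, α.target⟩, hβ ⟨0, β.source⟩, hβ ⟨1, β.target⟩⟩
  have hint := interior_nonempty_of_not_collinear hD fun h => hcol (h.subset hsub)
  have hω : ω (Q - P) (Q' - P') ≠ 0 := fun h =>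
    hcol (collinear_of_areaForm_eq_zero Complex.orientation hx.wbtw hx'.wbtw h)
  rcases hω.lt_or_gt with hneg | hpos
  · rw [Set.inter_comm]
    rw [Orientation.areaForm_swap, neg_lt_zero] at hneg
    exact inter_range_nonempty_of_areaForm_pos hD hint hP' hQ' hP hQ β α hβ hα hx' hx hneg
  · exact inter_range_nonempty_of_areaForm_pos hD hint hP hQ hP' hQ' α β hα hβ hx hx' hpos

end Complex

section KleinModel

open Real

/-- The Klein model of the hyperbolic plane, in the affine chart where the absolute is the parabola
`im = re ^ 2`. It is used because it turns hyperbolic segments into Euclidean ones. -/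
def kleinMap (z : ℍ) : ℂ := ⟨z.re, z.re ^ 2 + z.im ^ 2⟩

@[simp]
theorem kleinMap_re (z : ℍ) : (kleinMap z).re = z.re := rfl

@[simp]
theorem kleinMap_im (z : ℍ) : (kleinMap z).im = z.re ^ 2 + z.im ^ 2 := rfl

theorem kleinMap_injective : Function.Injective kleinMap := by
  intro z w h
  have hre : (kleinMap z).re = (kleinMap w).re := congrArg Complex.re h
  have him : (kleinMap z).im = (kleinMap w).im := congrArg Complex.im h
  rw [kleinMap_re, kleinMap_re] at hre
  rw [kleinMap_im, kleinMap_im, hre, add_right_inj, sq_eq_sq₀ z.im_pos.le w.im_pos.le] at him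
  exact UpperHalfPlane.ext_re_im hre him

theorem continuous_kleinMap : Continuous kleinMap :=
  Complex.equivRealProdCLM.symm.continuous.comp <| UpperHalfPlane.continuous_re.prodMk <|
    (UpperHalfPlane.continuous_re.pow 2).add (UpperHalfPlane.continuous_im.pow 2)

theorem range_kleinMap : Set.range kleinMap = {w : ℂ | w.re ^ 2 < w.im} := by
  ext w
  constructor
  · rintro ⟨z, rfl⟩
    exact lt_add_of_pos_right _ (pow_pos z.im_pos 2)
  · intro hw
    refine ⟨.mk ⟨w.re, √(w.im - w.re ^ 2)⟩ (sqrt_pos.2 (sub_pos.2 hw)), Complex.ext rfl ?_⟩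
    rw [kleinMap_im]
    change w.re ^ 2 + √(w.im - w.re ^ 2) ^ 2 = w.im
    rw [sq_sqrt (sub_pos.2 hw).le, add_sub_cancel]

theorem convex_range_kleinMap : Convex ℝ (Set.range kleinMap) := by
  rw [range_kleinMap]
  simpa using (even_two.convexOn_pow (𝕜 := ℝ)).convex_strict_epigraph.linear_preimage
    Complex.equivRealProdLm.toLinearMap

theorem add_eq_of_cosh_eq {x y z a b : ℝ} (hx : 0 ≤ x) (hy : 0 ≤ y) (hz : 0 ≤ z) (ha : 0 ≤ a)
    (hb : 0 ≤ b) (hx_eq : cosh x = a + b * cosh z) (hy_eq : cosh y = a * cosh z + b)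
    (hab : a ^ 2 + b ^ 2 + 2 * a * b * cosh z = 1) : x + y = z := by
  have hsinh_x : sinh x = b * sinh z := by
    rw [← sq_eq_sq₀ (sinh_nonneg_iff.2 hx) (mul_nonneg hb (sinh_nonneg_iff.2 hz)), mul_pow,
      sinh_sq, sinh_sq, hx_eq]
    linear_combination hab
  have hsinh_y : sinh y = a * sinh z := by
    rw [← sq_eq_sq₀ (sinh_nonneg_iff.2 hy) (mul_nonneg ha (sinh_nonneg_iff.2 hz)), mul_pow,
      sinh_sq, sinh_sq, hy_eq]
    linear_combination hab
  refine cosh_strictMonoOn.injOn (add_nonneg hx hy) hz ?_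
  rw [cosh_add, hx_eq, hy_eq, hsinh_x, hsinh_y]
  linear_combination cosh z * hab + a * b * sinh_sq z

variable {p q z : ℍ}

theorem dist_add_dist_of_wbtw_kleinMap (h : Wbtw ℝ (kleinMap p) (kleinMap z) (kleinMap q)) :
    dist p z + dist z q = dist p q := by
  obtain ⟨t, ⟨ht₀, ht₁⟩, hz⟩ := h
  have hre : (1 - t) * p.re + t * q.re = z.re := by
    simpa [AffineMap.lineMap_apply_module] using congrArg Complex.re hz
  have him : (1 - t) * (p.re ^ 2 + p.im ^ 2) + t * (q.re ^ 2 + q.im ^ 2) = z.re ^ 2 + z.im ^ 2 := by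
    simpa [AffineMap.lineMap_apply_module] using congrArg Complex.im hz
  -- `(1, kleinMap w) / w.im` represents `w` on the hyperboloid; in these terms `z` is `a p + b q`.
  refine add_eq_of_cosh_eq (a := (1 - t) * p.im / z.im) (b := t * q.im / z.im) dist_nonneg
    dist_nonneg dist_nonneg ?_ (by positivity) ?_ ?_ ?_
  · exact div_nonneg (mul_nonneg (sub_nonneg.2 ht₁) p.im_pos.le) z.im_pos.le
  · rw [UpperHalfPlane.cosh_dist', UpperHalfPlane.cosh_dist']
    field_simp
    linear_combination 2 * p.re * hre - him
  · rw [UpperHalfPlane.cosh_dist', UpperHalfPlane.cosh_dist']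
    field_simp
    linear_combination 2 * q.re * hre - him
  · rw [UpperHalfPlane.cosh_dist']
    field_simp
    linear_combination him - (z.re + (1 - t) * p.re + t * q.re) * hre

attribute [local instance] Complex.finrank_real_complex_fact

-- The left side is minus the Gram determinant of three points of the hyperboloid, that is, the
-- squared volume they span; it vanishes when they lie on a common geodesic.
theorem gram_cosh_dist_eq_areaForm_sq (p z q : ℍ) :
    1 + 2 * cosh (dist p z) * cosh (dist z q) * cosh (dist p q) - cosh (dist p z) ^ 2 -
        cosh (dist z q) ^ 2 - cosh (dist p q) ^ 2 =
      (Complex.orientation.areaForm (kleinMap z - kleinMap p) (kleinMap q - kleinMap p) /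
        (2 * p.im * z.im * q.im)) ^ 2 := by
  simp only [UpperHalfPlane.cosh_dist', Complex.areaForm, Complex.mul_im, Complex.conj_re,
    Complex.conj_im, Complex.sub_re, Complex.sub_im, kleinMap_re, kleinMap_im]
  field_simp
  ring

theorem collinear_kleinMap_of_dist_add_dist (h : dist p z + dist z q = dist p q) :
    Collinear ℝ {kleinMap p, kleinMap z, kleinMap q} := by
  have hgram := gram_cosh_dist_eq_areaForm_sq p z q
  rw [← h, cosh_add] at hgram
  have hsq : (Complex.orientation.areaForm (kleinMap z - kleinMap p) (kleinMap q - kleinMap p) /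
      (2 * p.im * z.im * q.im)) ^ 2 = 0 := by
    linear_combination -hgram - sinh (dist p z) ^ 2 * sinh_sq (dist z q) -
      sinh_sq (dist p z) * (cosh (dist z q) ^ 2 - 1)
  have hden : 2 * p.im * z.im * q.im ≠ 0 := by positivity
  have hω := (div_eq_zero_iff.1 (pow_eq_zero_iff two_ne_zero |>.1 hsq)).resolve_right hden
  refine (collinear_of_areaForm_eq_zero Complex.orientation (wbtw_self_left ℝ _ _)
    (wbtw_self_left ℝ _ _) hω).subset ?_
  simp only [Set.insert_subset_iff, Set.singleton_subset_iff, Set.mem_insert_iff,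
    Set.mem_singleton_iff, true_or, or_true, and_self]

theorem mem_hypSeg_iff_wbtw_kleinMap :
    z ∈ hypSeg p q ↔ Wbtw ℝ (kleinMap p) (kleinMap z) (kleinMap q) := by
  refine ⟨fun h => ?_, dist_add_dist_of_wbtw_kleinMap⟩
  have h : dist p z + dist z q = dist p q := h
  rcases (collinear_kleinMap_of_dist_add_dist h).wbtw_or_wbtw_or_wbtw with hzm | hqm | hpm
  · exact hzm
  · have hdist := dist_add_dist_of_wbtw_kleinMap hqm
    rw [dist_comm q p, dist_comm z p] at hdist
    have hzq : z = q := dist_le_zero.1 (by linarith)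
    rw [hzq]
    exact wbtw_self_right ℝ _ _
  · have hdist := dist_add_dist_of_wbtw_kleinMap hpm
    rw [dist_comm q p, dist_comm q z] at hdist
    have hpz : p = z := dist_le_zero.1 (by linarith)
    rw [hpz]
    exact wbtw_self_left ℝ _ _

theorem sbtw_kleinMap_of_mem_hypSeg_sdiff (h : z ∈ hypSeg p q \ {p, q}) :
    Sbtw ℝ (kleinMap p) (kleinMap z) (kleinMap q) := by
  obtain ⟨hz, hne⟩ := h
  rw [Set.mem_insert_iff, Set.mem_singleton_iff, not_or] at hne
  exact ⟨mem_hypSeg_iff_wbtw_kleinMap.1 hz, kleinMap_injective.ne hne.1,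
    kleinMap_injective.ne hne.2⟩

theorem exists_subset_hypSeg_of_collinear_kleinMap {S : Set ℍ} (hfin : S.Finite)
    (hne : S.Nonempty) (hS : Collinear ℝ (kleinMap '' S)) :
    ∃ u ∈ S, ∃ v ∈ S, S ⊆ hypSeg u v := by
  obtain ⟨_, ⟨u, hu, rfl⟩, _, ⟨v, hv, rfl⟩, huv⟩ :=
    exists_forall_wbtw_of_collinear (hfin.image kleinMap) (hne.image kleinMap) hS
  exact ⟨u, hu, v, hv, fun x hx =>
    mem_hypSeg_iff_wbtw_kleinMap.2 (huv _ (Set.mem_image_of_mem kleinMap hx))⟩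

variable {C : Set ℍ}

theorem convex_image_kleinMap (hC : ∀ p ∈ C, ∀ q ∈ C, hypSeg p q ⊆ C) :
    Convex ℝ (kleinMap '' C) := by
  rw [convex_iff_segment_subset]
  rintro _ ⟨p, hp, rfl⟩ _ ⟨q, hq, rfl⟩ w hw
  obtain ⟨z, rfl⟩ := convex_range_kleinMap.segment_subset ⟨p, rfl⟩ ⟨q, rfl⟩ hw
  rw [mem_segment_iff_wbtw, ← mem_hypSeg_iff_wbtw_kleinMap] at hw
  exact Set.mem_image_of_mem kleinMap (hC p hp q hq hw)

end KleinModel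

theorem notMem_interior_image_of_mem_frontier {X Y : Type*} [TopologicalSpace X]
    [TopologicalSpace Y] {f : X → Y} (hf : Continuous f) (hinj : Function.Injective f)
    {s : Set X} {x : X} (hx : x ∈ frontier s) : f x ∉ interior (f '' s) := fun hfx =>
  hx.2 <| hinj.preimage_image s ▸ preimage_interior_subset_interior_preimage hf hfx

theorem geodesic_chords_of_disjoint_paths_disjoint_general
    (C : Set UpperHalfPlane) (hCconv : ∀ p ∈ C, ∀ q ∈ C, hypSeg p q ⊆ C)
    (p₀ q₀ p₁ q₁ : UpperHalfPlane)
    (hp₀ : p₀ ∈ frontier C) (hq₀ : q₀ ∈ frontier C)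
    (hp₁ : p₁ ∈ frontier C) (hq₁ : q₁ ∈ frontier C)
    (α₀ : Path p₀ q₀) (α₁ : Path p₁ q₁)
    (hrange₀ : Set.range α₀ ⊆ C) (hrange₁ : Set.range α₁ ⊆ C)
    (hdisj : Set.range α₀ ∩ Set.range α₁ ⊆
      (({p₀, q₀} : Set UpperHalfPlane) ∩ ({p₁, q₁} : Set UpperHalfPlane)))
    (hnoncol : ¬ ∃ u ∈ ({p₀, q₀, p₁, q₁} : Set UpperHalfPlane),
        ∃ v ∈ ({p₀, q₀, p₁, q₁} : Set UpperHalfPlane),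
          ({p₀, q₀, p₁, q₁} : Set UpperHalfPlane) ⊆ hypSeg u v) :
    (hypSeg p₀ q₀ \ {p₀, q₀}) ∩ (hypSeg p₁ q₁ \ {p₁, q₁}) = ∅ := by
  rw [Set.eq_empty_iff_forall_notMem]
  rintro x ⟨hx₀, hx₁⟩
  have hx₀ := sbtw_kleinMap_of_mem_hypSeg_sdiff hx₀
  have hx₁ := sbtw_kleinMap_of_mem_hypSeg_sdiff hx₁
  have hcol : ¬ Collinear ℝ {kleinMap p₀, kleinMap q₀, kleinMap p₁, kleinMap q₁} := by
    intro hcol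
    refine hnoncol (exists_subset_hypSeg_of_collinear_kleinMap (Set.toFinite _)
      (Set.insert_nonempty _ _) ?_)
    rwa [Set.image_insert_eq, Set.image_insert_eq, Set.image_pair]
  have hfrontier {p : ℍ} (hp : p ∈ frontier C) : kleinMap p ∉ interior (kleinMap '' C) :=
    notMem_interior_image_of_mem_frontier continuous_kleinMap kleinMap_injective hp
  obtain ⟨_, ⟨s, rfl⟩, ⟨t, ht⟩⟩ := inter_range_nonempty_of_not_collinear
    (convex_image_kleinMap hCconv) (hfrontier hp₀) (hfrontier hq₀) (hfrontier hp₁)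
    (hfrontier hq₁) (α₀.map continuous_kleinMap) (α₁.map continuous_kleinMap)
    (Set.range_comp kleinMap α₀ ▸ Set.image_mono hrange₀)
    (Set.range_comp kleinMap α₁ ▸ Set.image_mono hrange₁) hx₀ hx₁ hcol
  obtain ⟨hs₀, hs₁⟩ := hdisj ⟨⟨s, rfl⟩, ⟨t, kleinMap_injective ht⟩⟩
  have hends := disjoint_pair_pair_of_not_collinear hx₀ hx₁.wbtw hcol
  rw [← Set.image_pair, ← Set.image_pair] at hends
  exact Set.disjoint_left.1 hends (Set.mem_image_of_mem kleinMap hs₀)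
    (Set.mem_image_of_mem kleinMap hs₁)

/-- Observation in the proof sketch of Lemma 5.3: in a closed geodesically convex
subset of the hyperbolic plane, the geodesic chords joining the endpoint pairs of
two simple, essentially disjoint paths with endpoints on the boundary (and with
the four endpoints not collinear) are disjoint in their interiors. -/
theorem geodesic_chords_of_disjoint_paths_disjoint
    (C : Set UpperHalfPlane) (hCclosed : IsClosed C)
    (hCconv : ∀ p ∈ C, ∀ q ∈ C, hypSeg p q ⊆ C)
    (p₀ q₀ p₁ q₁ : UpperHalfPlane)
    (hp₀ : p₀ ∈ frontier C) (hq₀ : q₀ ∈ frontier C)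
    (hp₁ : p₁ ∈ frontier C) (hq₁ : q₁ ∈ frontier C)
    (α₀ : Path p₀ q₀) (α₁ : Path p₁ q₁)
    (hinj₀ : Function.Injective α₀) (hinj₁ : Function.Injective α₁)
    (hrange₀ : Set.range α₀ ⊆ C) (hrange₁ : Set.range α₁ ⊆ C)
    (hdisj : Set.range α₀ ∩ Set.range α₁ ⊆
      (({p₀, q₀} : Set UpperHalfPlane) ∩ ({p₁, q₁} : Set UpperHalfPlane)))
    (hnoncol : ¬ ∃ u ∈ ({p₀, q₀, p₁, q₁} : Set UpperHalfPlane),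
        ∃ v ∈ ({p₀, q₀, p₁, q₁} : Set UpperHalfPlane),
          ({p₀, q₀, p₁, q₁} : Set UpperHalfPlane) ⊆ hypSeg u v) :
    (hypSeg p₀ q₀ \ {p₀, q₀}) ∩ (hypSeg p₁ q₁ \ {p₁, q₁}) = ∅ :=
  geodesic_chords_of_disjoint_paths_disjoint_general C hCconv p₀ q₀ p₁ q₁ hp₀ hq₀ hp₁ hq₁ α₀ α₁
    hrange₀ hrange₁ hdisj hnoncol
end
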